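/- arXiv:1512.08655 — 2 statements merged into one kernel-verified Lean document; each statement's English description precedes it below -/
import Mathlib

section
/- For a nondegenerate d-simplex Δ in R^d with vertices v_0,…,v_d, circumcenter o_Δ, circumradius R_Δ, and centroid m_Δ = (v_0+…+v_d)/(d+1), one has −Pow(Δ) = Vol(Δ)/((d+1)(d+2)) · Σ_{0≤j<i≤d} ||v_i − v_j||^2. -/
open MeasureTheory Finset

section Helpers

variable {d : ℕ}

/-- Folding map onto half of the simplex. -/
noncomputable def foldMap (b : AffineBasis (Fin (d + 1)) ℝ (EuclideanSpace ℝ (Fin d)))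
    (i j : Fin (d + 1)) (x : EuclideanSpace ℝ (Fin d)) : EuclideanSpace ℝ (Fin d) :=
  x + (b.coord j x / 2) • (b i - b j)

theorem coord_add_smul (b : AffineBasis (Fin (d + 1)) ℝ (EuclideanSpace ℝ (Fin d)))
    (i j k : Fin (d + 1)) (x : EuclideanSpace ℝ (Fin d)) (c : ℝ) :
    b.coord k (x + c • (b i - b j)) =
      b.coord k x + c * ((if k = i then 1 else 0) - (if k = j then 1 else 0)) := by
  have h1 : x + c • (b i - b j) = (c • (b i - b j)) +ᵥ x := by
    rw [vadd_eq_add, add_comm]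
  have h2 : (b.coord k).linear (b i - b j) = b.coord k (b i) - b.coord k (b j) := by
    have := (b.coord k).linearMap_vsub (b i) (b j)
    simpa using this
  rw [h1, AffineMap.map_vadd, map_smul, h2, b.coord_apply, b.coord_apply]
  simp only [vadd_eq_add, smul_eq_mul]
  ring

theorem continuous_coord (b : AffineBasis (Fin (d + 1)) ℝ (EuclideanSpace ℝ (Fin d)))
    (k : Fin (d + 1)) : Continuous (b.coord k) :=
  continuous_barycentric_coord b k

theorem hasFDerivAt_foldMap (b : AffineBasis (Fin (d + 1)) ℝ (EuclideanSpace ℝ (Fin d)))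
    (i j : Fin (d + 1)) (x : EuclideanSpace ℝ (Fin d)) :
    HasFDerivAt (foldMap b i j)
      (LinearMap.toContinuousLinearMap
        (LinearMap.transvection ((1/2 : ℝ) • (b.coord j).linear) (b i - b j))) x := by
  have h : foldMap b i j = fun y =>
      (LinearMap.toContinuousLinearMap
        (LinearMap.transvection ((1/2 : ℝ) • (b.coord j).linear) (b i - b j))) y +
        (b.coord j 0 / 2) • (b i - b j) := by
    funext y
    have : b.coord j y = (b.coord j).linear y + b.coord j 0 := by
      have := (b.coord j).map_vadd 0 y
      simpa using this
    simp only [foldMap, LinearMap.coe_toContinuousLinearMap', LinearMap.transvection.apply, this,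
      LinearMap.smul_apply, smul_eq_mul]
    module
  rw [h]
  exact (ContinuousLinearMap.hasFDerivAt _).add_const _

theorem det_foldMap (b : AffineBasis (Fin (d + 1)) ℝ (EuclideanSpace ℝ (Fin d)))
    (i j : Fin (d + 1)) (hij : i ≠ j) :
    (LinearMap.toContinuousLinearMap
        (LinearMap.transvection ((1/2 : ℝ) • (b.coord j).linear) (b i - b j))).det = 1 / 2 := by
  have h2 : (b.coord j).linear (b i - b j) = b.coord j (b i) - b.coord j (b j) := by
    have := (b.coord j).linearMap_vsub (b i) (b j)
    simpa using this
  rw [LinearMap.det_toContinuousLinearMap, LinearMap.transvection.det]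
  simp only [LinearMap.smul_apply, h2, b.coord_apply, if_neg hij.symm]
  norm_num

theorem coord_foldMap (b : AffineBasis (Fin (d + 1)) ℝ (EuclideanSpace ℝ (Fin d)))
    (i j k : Fin (d + 1)) (x : EuclideanSpace ℝ (Fin d)) :
    b.coord k (foldMap b i j x) =
      b.coord k x + (b.coord j x / 2) * ((if k = i then 1 else 0) - (if k = j then 1 else 0)) :=
  coord_add_smul b i j k x _

theorem foldMap_injective (b : AffineBasis (Fin (d + 1)) ℝ (EuclideanSpace ℝ (Fin d)))
    (i j : Fin (d + 1)) (hij : i ≠ j) : Function.Injective (foldMap b i j) := by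
  intro x y h
  have hj := congrArg (b.coord j) h
  rw [coord_foldMap, coord_foldMap] at hj
  simp only [if_neg hij.symm, if_true] at hj
  have hj' : b.coord j x = b.coord j y := by linarith
  simpa [foldMap, hj'] using h

/-- The simplex in barycentric coordinates. -/
def simp0 (b : AffineBasis (Fin (d + 1)) ℝ (EuclideanSpace ℝ (Fin d))) :
    Set (EuclideanSpace ℝ (Fin d)) := {x | ∀ i, 0 ≤ b.coord i x}

theorem foldMap_image (b : AffineBasis (Fin (d + 1)) ℝ (EuclideanSpace ℝ (Fin d)))
    (i j : Fin (d + 1)) (hij : i ≠ j) :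
    foldMap b i j '' simp0 b = simp0 b ∩ {x | b.coord j x ≤ b.coord i x} := by
  ext y
  constructor
  · rintro ⟨x, hx, rfl⟩
    have hx' : ∀ i, 0 ≤ b.coord i x := hx
    refine ⟨fun k => ?_, ?_⟩
    · rw [coord_foldMap]
      have h1 := hx' k
      have h2 := hx' j
      by_cases hk : k = i
      · subst hk
        simp only [if_neg hij, if_true]; linarith
      · by_cases hk' : k = j
        · subst hk'
          simp only [if_neg hk, if_true]; linarith
        · simp only [if_neg hk, if_neg hk']; linarith
    · simp only [Set.mem_setOf_eq]
      rw [coord_foldMap, coord_foldMap]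
      have h1 := hx' i
      have h2 := hx' j
      simp only [if_neg hij, if_neg hij.symm, if_true]; linarith
  · rintro ⟨hy, hle⟩
    have hy' : ∀ i, 0 ≤ b.coord i y := hy
    have hle' : b.coord j y ≤ b.coord i y := hle
    refine ⟨y + (- b.coord j y) • (b i - b j), fun k => ?_, ?_⟩
    · rw [coord_add_smul]
      have h1 := hy' k
      have h2 := hy' j
      by_cases hk : k = i
      · subst hk
        simp only [if_neg hij, if_true]; linarith
      · by_cases hk' : k = j
        · subst hk'
          simp only [if_neg hk, if_true]; linarith
        · simp only [if_neg hk, if_neg hk']; linarith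
    · rw [foldMap, coord_add_smul]
      simp only [if_neg hij.symm, if_true]
      module

theorem isCompact_simp0 (b : AffineBasis (Fin (d + 1)) ℝ (EuclideanSpace ℝ (Fin d))) :
    IsCompact (simp0 b) := by
  have : simp0 b = convexHull ℝ (Set.range b) := b.convexHull_eq_nonneg_coord.symm
  rw [this]
  exact (Set.finite_range b).isCompact_convexHull ℝ

theorem volume_diag (b : AffineBasis (Fin (d + 1)) ℝ (EuclideanSpace ℝ (Fin d)))
    (i j : Fin (d + 1)) (hij : i ≠ j) :
    volume {x | b.coord i x = b.coord j x} = 0 := by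
  let s : AffineSubspace ℝ (EuclideanSpace ℝ (Fin d)) :=
    (AffineSubspace.mk' (0:ℝ) ⊥).comap (b.coord i - b.coord j)
  have hs : (s : Set (EuclideanSpace ℝ (Fin d))) = {x | b.coord i x = b.coord j x} := by
    ext x
    simp [s, sub_eq_zero]
  rw [← hs]
  apply Measure.addHaar_affineSubspace
  intro h
  have : b i ∈ (s : Set (EuclideanSpace ℝ (Fin d))) := by rw [h]; trivial
  rw [hs] at this
  simp [b.coord_apply, hij.symm] at this

theorem integral_fold (b : AffineBasis (Fin (d + 1)) ℝ (EuclideanSpace ℝ (Fin d)))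
    (i j : Fin (d + 1)) (hij : i ≠ j) (f : EuclideanSpace ℝ (Fin d) → ℝ) :
    ∫ x in simp0 b ∩ {x | b.coord j x ≤ b.coord i x}, f x =
      1 / 2 * ∫ x in simp0 b, f (foldMap b i j x) := by
  rw [← foldMap_image b i j hij,
    integral_image_eq_integral_abs_det_fderiv_smul volume (isCompact_simp0 b).measurableSet
      (fun x _ => (hasFDerivAt_foldMap b i j x).hasFDerivWithinAt)
      (foldMap_injective b i j hij).injOn]
  rw [det_foldMap b i j hij, ← integral_const_mul]
  norm_num

theorem integral_split (b : AffineBasis (Fin (d + 1)) ℝ (EuclideanSpace ℝ (Fin d)))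
    (i j : Fin (d + 1)) (hij : i ≠ j) (f : EuclideanSpace ℝ (Fin d) → ℝ) (hf : Continuous f) :
    ∫ x in simp0 b, f x =
      1 / 2 * (∫ x in simp0 b, f (foldMap b i j x)) +
      1 / 2 * (∫ x in simp0 b, f (foldMap b j i x)) := by
  have hint : IntegrableOn f (simp0 b) := hf.continuousOn.integrableOn_compact (isCompact_simp0 b)
  rw [← integral_fold b i j hij, ← integral_fold b j i hij.symm]
  have hm : MeasurableSet (simp0 b ∩ {x | b.coord i x ≤ b.coord j x}) :=
    (isCompact_simp0 b).measurableSet.inter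
      (isClosed_le (continuous_coord b i) (continuous_coord b j)).measurableSet
  rw [← integral_union_ae _ hm.nullMeasurableSet (hint.mono_set Set.inter_subset_left)
    (hint.mono_set Set.inter_subset_left)]
  · congr 2
    ext x
    simp only [Set.mem_union, Set.mem_inter_iff, Set.mem_setOf_eq]
    have := le_total (b.coord i x) (b.coord j x)
    tauto
  · refine measure_mono_null ?_ (volume_diag b i j hij)
    rintro x ⟨⟨_, h1⟩, ⟨_, h2⟩⟩
    exact le_antisymm h2 h1

theorem integrable_simp0 (b : AffineBasis (Fin (d + 1)) ℝ (EuclideanSpace ℝ (Fin d)))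
    (f : EuclideanSpace ℝ (Fin d) → ℝ) (hf : Continuous f) :
    Integrable f (volume.restrict (simp0 b)) :=
  hf.continuousOn.integrableOn_compact (isCompact_simp0 b)

/-- First moments are equal. -/
theorem first_eq (b : AffineBasis (Fin (d + 1)) ℝ (EuclideanSpace ℝ (Fin d)))
    (i j : Fin (d + 1)) :
    ∫ x in simp0 b, b.coord i x = ∫ x in simp0 b, b.coord j x := by
  by_cases hij : i = j
  · rw [hij]
  have hc := continuous_coord b
  have h := integral_split b i j hij (fun x => b.coord i x) (hc i)
  simp only [coord_foldMap, if_neg hij, if_true] at h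
  have e1 : ∫ x in simp0 b, (b.coord i x + b.coord j x / 2 * (1 - 0)) =
      (∫ x in simp0 b, b.coord i x) + 1/2 * ∫ x in simp0 b, b.coord j x := by
    rw [← integral_const_mul, ← integral_add]
    · congr 1; funext x; ring
    · exact integrable_simp0 b _ (by fun_prop)
    · exact integrable_simp0 b _ (by fun_prop)
  have e2 : ∫ x in simp0 b, (b.coord i x + b.coord i x / 2 * (0 - 1)) =
      1/2 * ∫ x in simp0 b, b.coord i x := by
    rw [← integral_const_mul]
    congr 1; funext x; ring
  rw [e1, e2] at h
  linarith

theorem second_aux (b : AffineBasis (Fin (d + 1)) ℝ (EuclideanSpace ℝ (Fin d)))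
    (i j : Fin (d + 1)) (p q r : ℝ) :
    ∫ x in simp0 b, (p * b.coord i x ^ 2 + q * b.coord j x ^ 2 + r * (b.coord i x * b.coord j x)) =
      p * (∫ x in simp0 b, b.coord i x ^ 2) + q * (∫ x in simp0 b, b.coord j x ^ 2) +
      r * ∫ x in simp0 b, b.coord i x * b.coord j x := by
  have hc := continuous_coord b
  rw [← integral_const_mul, ← integral_const_mul, ← integral_const_mul, ← integral_add,
    ← integral_add]
  all_goals exact integrable_simp0 b _ (by fun_prop)

theorem second_rel (b : AffineBasis (Fin (d + 1)) ℝ (EuclideanSpace ℝ (Fin d)))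
    (i j : Fin (d + 1)) (hij : i ≠ j) :
    (∫ x in simp0 b, b.coord i x * b.coord j x) = 1 / 2 * ∫ x in simp0 b, b.coord i x ^ 2 := by
  have hc := continuous_coord b
  have h1 := integral_split b i j hij (fun x => b.coord i x ^ 2) (by fun_prop)
  have h3 := integral_split b i j hij (fun x => b.coord i x * b.coord j x) (by fun_prop)
  simp only [coord_foldMap, if_neg hij, if_neg (Ne.symm hij), if_true] at h1 h3
  have e1 := second_aux b i j 1 (1/4) 1
  have e2 := second_aux b i j (1/4) 0 0
  have e3 := second_aux b i j 0 (1/4) (1/2)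
  have e4 := second_aux b i j (1/4) 0 (1/2)
  have c1 : ∀ x, (b.coord i x + b.coord j x / 2 * (1 - 0)) ^ 2 =
    1 * b.coord i x ^ 2 + 1/4 * b.coord j x ^ 2 + 1 * (b.coord i x * b.coord j x) := by
    intro x; ring
  have c2 : ∀ x, (b.coord i x + b.coord i x / 2 * (0 - 1)) ^ 2 =
    1/4 * b.coord i x ^ 2 + 0 * b.coord j x ^ 2 + 0 * (b.coord i x * b.coord j x) := by
    intro x; ring
  have c3 : ∀ x, (b.coord i x + b.coord j x / 2 * (1 - 0)) *
      (b.coord j x + b.coord j x / 2 * (0 - 1)) =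
    0 * b.coord i x ^ 2 + 1/4 * b.coord j x ^ 2 + 1/2 * (b.coord i x * b.coord j x) := by
    intro x; ring
  have c4 : ∀ x, (b.coord i x + b.coord i x / 2 * (0 - 1)) *
      (b.coord j x + b.coord i x / 2 * (1 - 0)) =
    1/4 * b.coord i x ^ 2 + 0 * b.coord j x ^ 2 + 1/2 * (b.coord i x * b.coord j x) := by
    intro x; ring
  simp only [c1, c2] at h1
  simp only [c3, c4] at h3
  rw [e1, e2] at h1
  rw [e3, e4] at h3
  linarith

theorem first_val (b : AffineBasis (Fin (d + 1)) ℝ (EuclideanSpace ℝ (Fin d)))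
    (i : Fin (d + 1)) :
    (d + 1) * ∫ x in simp0 b, b.coord i x = (volume (simp0 b)).toReal := by
  have hc := continuous_coord b
  have h : ∫ x in simp0 b, ∑ k, b.coord k x = ∑ k, ∫ x in simp0 b, b.coord k x :=
    integral_finsetSum _ fun k _ => integrable_simp0 b _ (hc k)
  rw [Finset.sum_congr rfl fun k _ => first_eq b k i] at h
  simp only [b.sum_coord_apply_eq_one] at h
  simp [Measure.real] at h
  rw [h]

theorem second_val (b : AffineBasis (Fin (d + 1)) ℝ (EuclideanSpace ℝ (Fin d)))
    (i j : Fin (d + 1)) (hij : i ≠ j) :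
    ∫ x in simp0 b, b.coord i x * b.coord j x =
      (volume (simp0 b)).toReal / ((d + 1) * (d + 2)) := by
  have hc := continuous_coord b
  have h : ∫ x in simp0 b, ∑ k, b.coord i x * b.coord k x =
      ∑ k, ∫ x in simp0 b, b.coord i x * b.coord k x :=
    integral_finsetSum _ fun k _ => integrable_simp0 b _ (by fun_prop)
  rw [← Finset.add_sum_erase _ _ (Finset.mem_univ i),
    Finset.sum_congr rfl fun k hk => second_rel b i k (Finset.ne_of_mem_erase hk).symm] at h
  simp only [← Finset.mul_sum, b.sum_coord_apply_eq_one, mul_one, Finset.sum_const,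
    Finset.card_erase_of_mem (Finset.mem_univ i), Finset.card_univ, Fintype.card_fin,
    Nat.add_sub_cancel, nsmul_eq_mul, ← pow_two] at h
  rw [second_rel b i j hij, ← first_val b i, h]
  field_simp
  ring

theorem sum_sum_symm (n : ℕ) (f : Fin n → Fin n → ℝ) (hs : ∀ i j, f i j = f j i)
    (h0 : ∀ i, f i i = 0) :
    ∑ i, ∑ j, f i j = 2 * ∑ i, ∑ j ∈ Finset.Iio i, f i j := by
  have h1 : ∀ i, ∑ j, f i j = ∑ j ∈ Finset.Iio i, f i j + ∑ j ∈ Finset.Ioi i, f i j := by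
    intro i
    rw [← Finset.sum_union]
    · symm
      apply Finset.sum_subset (Finset.subset_univ _)
      intro j _ hj
      have : j = i := by
        simp only [Finset.mem_union, Finset.mem_Iio, Finset.mem_Ioi, not_or, not_lt] at hj
        exact le_antisymm hj.2 hj.1
      rw [this, h0]
    · rw [Finset.disjoint_left]
      intro j hj hj'
      exact lt_asymm (Finset.mem_Iio.1 hj) (Finset.mem_Ioi.1 hj')
  have h2 : ∑ i, ∑ j ∈ Finset.Ioi i, f i j = ∑ i, ∑ j ∈ Finset.Iio i, f i j := by
    rw [Finset.sum_comm' (t' := Finset.univ) (s' := fun j => Finset.Iio j)]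
    · exact Finset.sum_congr rfl fun i _ => Finset.sum_congr rfl fun j _ => hs _ _
    · intro x y; simp
  rw [Finset.sum_congr rfl fun i _ => h1 i, Finset.sum_add_distrib, h2]
  ring

theorem pow_formula (b : AffineBasis (Fin (d + 1)) ℝ (EuclideanSpace ℝ (Fin d)))
    (o : EuclideanSpace ℝ (Fin d)) (R : ℝ) (ho : ∀ i, dist (b i) o = R)
    (x : EuclideanSpace ℝ (Fin d)) :
    ‖x - o‖ ^ 2 - R ^ 2 =
      -∑ i, ∑ j ∈ Finset.Iio i, b.coord i x * b.coord j x * ‖b i - b j‖ ^ 2 := by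
  have hsum := b.sum_coord_apply_eq_one x
  have hx : x - o = ∑ i, b.coord i x • (b i - o) := by
    simp only [smul_sub, Finset.sum_sub_distrib, ← Finset.sum_smul, hsum, one_smul,
      b.linear_combination_coord_eq_self]
  have hn : ∀ i, ‖b i - o‖ = R := fun i => by rw [← dist_eq_norm, ho]
  have hin : ∀ i j, inner ℝ (b i - o) (b j - o) = R ^ 2 - ‖b i - b j‖ ^ 2 / 2 := by
    intro i j
    have := norm_sub_sq_real (b i - o) (b j - o)
    rw [sub_sub_sub_cancel_right, hn, hn] at this
    linarith
  have h2 := sum_sum_symm (d+1) (fun i j => b.coord i x * b.coord j x * ‖b i - b j‖ ^ 2)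
    (fun i j => by rw [norm_sub_rev]; ring) (fun i => by simp)
  have h3 : ‖x - o‖ ^ 2 = ∑ i, ∑ j, b.coord i x * b.coord j x * inner ℝ (b i - o) (b j - o) := by
    rw [← real_inner_self_eq_norm_sq, hx, sum_inner]
    refine Finset.sum_congr rfl fun i _ => ?_
    rw [inner_sum]
    refine Finset.sum_congr rfl fun j _ => ?_
    rw [real_inner_smul_left, real_inner_smul_right]; ring
  have h4 : ∑ i, ∑ j, b.coord i x * b.coord j x * R ^ 2 = R ^ 2 := by
    simp only [← Finset.sum_mul, ← Finset.mul_sum, hsum, mul_one, one_mul]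
  have h5 : ‖x - o‖ ^ 2 = R ^ 2 -
      1 / 2 * ∑ i, ∑ j, b.coord i x * b.coord j x * ‖b i - b j‖ ^ 2 := by
    rw [h3]
    conv_rhs => rw [← h4]
    rw [Finset.mul_sum, ← Finset.sum_sub_distrib]
    refine Finset.sum_congr rfl fun i _ => ?_
    rw [Finset.mul_sum, ← Finset.sum_sub_distrib]
    refine Finset.sum_congr rfl fun j _ => ?_
    rw [hin]; ring
  rw [h5, h2]; ring

end Helpers

/-- `-Pow(Δ) = Vol(Δ)/((d+1)(d+2)) · Σ_{j<i} ‖v_i - v_j‖²` for a nondegenerate `d`-simplex. -/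
theorem neg_pow_eq_sum_sq_edges {d : ℕ}
    (v : Fin (d + 1) → EuclideanSpace ℝ (Fin d)) (hv : AffineIndependent ℝ v)
    (o : EuclideanSpace ℝ (Fin d)) (R : ℝ) (ho : ∀ i, dist (v i) o = R) :
    -(∫ x in convexHull ℝ (Set.range v), (‖x - o‖ ^ 2 - R ^ 2)) =
      (volume (convexHull ℝ (Set.range v))).toReal / ((d + 1) * (d + 2)) *
        ∑ i : Fin (d + 1), ∑ j ∈ Finset.Iio i, ‖v i - v j‖ ^ 2 := by
  obtain ⟨b, rfl⟩ : ∃ b : AffineBasis (Fin (d + 1)) ℝ (EuclideanSpace ℝ (Fin d)), ⇑b = v :=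
    ⟨⟨v, hv, hv.affineSpan_eq_top_iff_card_eq_finrank_add_one.2 (by simp)⟩, rfl⟩
  have hS : convexHull ℝ (Set.range b) = simp0 b := b.convexHull_eq_nonneg_coord
  have hc := continuous_coord b
  rw [hS]
  simp only [pow_formula b o R ho]
  rw [integral_neg, neg_neg, integral_finsetSum _ fun i _ => integrable_simp0 b _ (by fun_prop),
    Finset.mul_sum]
  refine Finset.sum_congr rfl fun i _ => ?_
  rw [integral_finsetSum _ fun i _ => integrable_simp0 b _ (by fun_prop), Finset.mul_sum]
  refine Finset.sum_congr rfl fun j hj => ?_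
  rw [integral_mul_const, second_val b i j (Finset.mem_Iio.1 hj).ne']
end

section
/- For a nondegenerate d-simplex Δ in R^d with circumcenter o_Δ, circumradius R_Δ, and centroid m_Δ, one has −Pow(Δ) = (d+1)/(d+2) · Vol(Δ) · (R_Δ^2 − ||o_Δ − m_Δ||^2). -/
open MeasureTheory

theorem aux_lin {E : Type*} [AddCommGroup E] [Module ℝ E] (l : E →ᵃ[ℝ] ℝ) (x w : E) (c : ℝ) :
    l (x + c • w) = l x + c * l.linear w := by
  have := l.map_vadd x (c • w)
  simp only [vadd_eq_add, map_smul, smul_eq_mul] at this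
  rw [add_comm x, this, add_comm]

theorem aux_cov {E : Type*} [NormedAddCommGroup E] [InnerProductSpace ℝ E] [FiniteDimensional ℝ E]
    [MeasurableSpace E] [BorelSpace E] (l : E →ᵃ[ℝ] ℝ) (w : E) (c : ℝ)
    (hc : 1 + l.linear w = c) (hc0 : c ≠ 0) (S : Set E) (hS : MeasurableSet S) (f : E → ℝ) :
    ∫ x in S, f x = |c| * ∫ x in (fun x => x + l x • w) ⁻¹' S, f (x + l x • w) := by
  set T : E → E := fun x => x + l x • w with hT
  have hlc : Continuous l := l.continuous_of_finiteDimensional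
  have hTc : Continuous T := by fun_prop
  have hl : ∀ x, l (T x) = c * l x := by
    intro x
    simp only [hT, aux_lin, ← hc]; ring
  have hinj : Function.Injective T := by
    intro x y hxy
    have h1 : l x = l y := by
      have := congrArg l hxy
      rw [hl, hl] at this
      exact mul_left_cancel₀ hc0 this
    simpa [hT, h1] using hxy
  have hsurj : Function.Surjective T := by
    intro y
    refine ⟨y + (-(l y / c)) • w, ?_⟩
    simp only [hT, aux_lin]
    have : l.linear w = c - 1 := by linarith
    rw [this, add_assoc, ← add_smul]
    have : -(l y / c) + (l y + -(l y / c) * (c - 1)) = 0 := by field_simp; ring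
    rw [this]; simp
  let L : E →L[ℝ] E := LinearMap.toContinuousLinearMap (LinearMap.transvection l.linear w)
  have hder : ∀ x, HasFDerivAt T L x := by
    intro x
    have : T = fun x => L x + (l 0) • w := by
      funext x
      have h := aux_lin l 0 x 1
      simp only [one_smul, zero_add, one_mul] at h
      simp [hT, L, LinearMap.transvection.apply, h, add_smul]
      abel
    rw [this]
    exact (L.hasFDerivAt).add_const _
  have hdet : L.det = c := by
    simp [L, ContinuousLinearMap.det, LinearMap.transvection.det, hc]
  have key := integral_image_eq_integral_abs_det_fderiv_smul volume
    (hTc.measurable hS) (fun x _ => (hder x).hasFDerivWithinAt) (hinj.injOn) f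
  rw [Set.image_preimage_eq S hsurj] at key
  rw [key]
  simp only [hdet, smul_eq_mul]
  rw [integral_const_mul]

section
variable {E : Type*} [NormedAddCommGroup E] [InnerProductSpace ℝ E] [FiniteDimensional ℝ E]
    [MeasurableSpace E] [BorelSpace E] {ι : Type*} [Fintype ι] [DecidableEq ι]
    (b : AffineBasis ι ℝ E)

theorem aux_cc (i : ι) : Continuous (b.coord i) := (b.coord i).continuous_of_finiteDimensional

theorem aux_clin (i j k : ι) : (b.coord k).linear (b i - b j) =
    (if k = i then 1 else 0) - (if k = j then 1 else 0) := by
  have := (b.coord k).linearMap_vsub (b i) (b j)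
  simp only [vsub_eq_sub, b.coord_apply] at this
  exact this

theorem aux_compact : IsCompact (convexHull ℝ (Set.range b)) :=
  (Set.finite_range b).isCompact_convexHull (𝕜 := ℝ)

theorem aux_int (f : E → ℝ) (hf : Continuous f) : IntegrableOn f (convexHull ℝ (Set.range b)) :=
  hf.continuousOn.integrableOn_compact (aux_compact b)

theorem aux_swap (i j : ι) :
    ∫ x in convexHull ℝ (Set.range b), b.coord i x * b.coord i x =
    ∫ x in convexHull ℝ (Set.range b), b.coord j x * b.coord j x := by
  rcases eq_or_ne i j with rfl | hij
  · rfl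
  have hji := hij.symm
  have h := aux_cov (b.coord j - b.coord i) (b i - b j) (-1)
    (by rw [AffineMap.sub_linear, LinearMap.sub_apply, aux_clin, aux_clin]; simp only [hij, hji, if_true, if_false]; norm_num) (by norm_num) _ (aux_compact b).measurableSet
    (fun x => b.coord i x * b.coord i x)
  rw [h]
  have hT : ∀ k x, b.coord k (x + (b.coord j - b.coord i) x • (b i - b j)) =
      b.coord (Equiv.swap i j k) x := by
    intro k x
    rw [aux_lin, aux_clin, Equiv.swap_apply_def]
    simp only [AffineMap.coe_sub, Pi.sub_apply]
    split_ifs <;> simp_all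
  have hset : (fun x => x + (b.coord j - b.coord i) x • (b i - b j)) ⁻¹'
      (convexHull ℝ (Set.range b)) = convexHull ℝ (Set.range b) := by
    rw [b.convexHull_eq_nonneg_coord]
    ext x
    simp only [Set.mem_preimage, Set.mem_ofPred_eq, hT]
    exact (Equiv.swap i j).forall_congr_left.trans (by simp)
  rw [hset]
  simp only [hT]
  simp

theorem aux_half (i j : ι) (hij : i ≠ j) (f : E → ℝ) :
    ∫ x in convexHull ℝ (Set.range b) ∩ {x | b.coord j x ≤ b.coord i x},
      b.coord i x * b.coord j x =
    (1/4) * (∫ x in convexHull ℝ (Set.range b), b.coord i x * b.coord j x) +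
    (1/8) * (∫ x in convexHull ℝ (Set.range b), b.coord j x * b.coord j x) := by
  have hji := hij.symm
  have hm : MeasurableSet (convexHull ℝ (Set.range b) ∩ {x | b.coord j x ≤ b.coord i x}) :=
    (aux_compact b).measurableSet.inter (measurableSet_le (aux_cc b j).measurable
      (aux_cc b i).measurable)
  have h := aux_cov ((1/2 : ℝ) • b.coord j) (b i - b j) (1/2)
    (by rw [AffineMap.smul_linear, LinearMap.smul_apply, aux_clin]; simp only [hji, if_true, if_false, smul_eq_mul]; norm_num) (by norm_num) _ hm
    (fun x => b.coord i x * b.coord j x)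
  rw [h]
  have hT : ∀ k x, b.coord k (x + ((1/2 : ℝ) • b.coord j) x • (b i - b j)) =
      b.coord k x + (b.coord j x / 2) *
        ((if k = i then 1 else 0) - (if k = j then 1 else 0)) := by
    intro k x
    rw [aux_lin, aux_clin]
    simp only [AffineMap.coe_smul, Pi.smul_apply, smul_eq_mul]
    ring
  have hset : (fun x => x + ((1/2 : ℝ) • b.coord j) x • (b i - b j)) ⁻¹'
      (convexHull ℝ (Set.range b) ∩ {x | b.coord j x ≤ b.coord i x})
        = convexHull ℝ (Set.range b) := by
    rw [b.convexHull_eq_nonneg_coord]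
    ext x
    simp only [Set.mem_preimage, Set.mem_inter_iff, Set.mem_ofPred_eq, hT]
    constructor
    · rintro ⟨h1, h2⟩ k
      have hi := h1 i
      have hj := h1 j
      have hk := h1 k
      simp only [hij, hji, if_true, if_false] at h2 hi hj
      by_cases k1 : k = i
      · subst k1; linarith
      by_cases k2 : k = j
      · subst k2; linarith
      simpa [k1, k2] using hk
    · intro h
      have hi := h i
      have hj := h j
      refine ⟨fun k => ?_, ?_⟩
      · have hk := h k
        by_cases k1 : k = i
        · subst k1; simp [hij]; linarith
        by_cases k2 : k = j
        · subst k2; simp [hji]; linarith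
        simpa [k1, k2] using hk
      · simp [hij, hji]; linarith
  rw [hset]
  simp only [hT]
  have ci := aux_cc b i
  have cj := aux_cc b j
  rw [← integral_const_mul, ← integral_const_mul, ← integral_const_mul, ← integral_add]
  · congr 1
    funext x
    simp only [hij, hji, if_true, if_false]
    rw [abs_of_pos (by norm_num)]
    ring
  · exact aux_int b _ (by fun_prop)
  · exact aux_int b _ (by fun_prop)

theorem aux_null (i j : ι) (hij : i ≠ j) : volume {x : E | b.coord i x = b.coord j x} = 0 := by
  let A : AffineSubspace ℝ E := (AffineSubspace.mk' (0:ℝ) ⊥).comap (b.coord i - b.coord j)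
  have hA : (A : Set E) = {x : E | b.coord i x = b.coord j x} := by
    ext x
    simp [A, AffineSubspace.mem_mk', sub_eq_zero]
  rw [← hA]
  apply Measure.addHaar_affineSubspace
  intro h
  have : b i ∈ (A : Set E) := by rw [h]; trivial
  rw [hA] at this
  simp [b.coord_apply, hij.symm] at this

theorem aux_off (i j : ι) (hij : i ≠ j) :
    ∫ x in convexHull ℝ (Set.range b), b.coord i x * b.coord j x =
    (1/2) * ∫ x in convexHull ℝ (Set.range b), b.coord i x * b.coord i x := by
  have ci := aux_cc b i
  have cj := aux_cc b j
  have h1 := aux_half b i j hij 0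
  have h2 := aux_half b j i hij.symm 0
  have hs := aux_swap b i j
  have hi := aux_int b (fun x => b.coord i x * b.coord j x) (by fun_prop)
  set D := convexHull ℝ (Set.range b)
  have hu : D = (D ∩ {x | b.coord j x ≤ b.coord i x}) ∪ (D ∩ {x | b.coord i x ≤ b.coord j x}) := by
    rw [← Set.inter_union_distrib_left]
    symm
    rw [Set.inter_eq_left]
    intro x _
    exact le_total (b.coord j x) (b.coord i x)
  have hm : MeasurableSet (D ∩ {x | b.coord i x ≤ b.coord j x}) :=
    (aux_compact b).measurableSet.inter (measurableSet_le ci.measurable cj.measurable)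
  have h3 : ∫ x in D, b.coord i x * b.coord j x =
      (∫ x in D ∩ {x | b.coord j x ≤ b.coord i x}, b.coord i x * b.coord j x) +
      (∫ x in D ∩ {x | b.coord i x ≤ b.coord j x}, b.coord i x * b.coord j x) := by
    conv_lhs => rw [hu]
    apply setIntegral_union₀ _ hm.nullMeasurableSet (hi.mono_set Set.inter_subset_left)
      (hi.mono_set Set.inter_subset_left)
    refine measure_mono_null ?_ (aux_null b i j hij)
    rintro x ⟨⟨_, hx⟩, ⟨_, hy⟩⟩
    exact le_antisymm hy hx
  simp only [mul_comm (b.coord j _) (b.coord i _)] at h2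
  rw [h1, h2] at h3
  linarith

theorem aux_G (i j : ι) :
    ((Fintype.card ι : ℝ) * (Fintype.card ι + 1)) *
      ∫ x in convexHull ℝ (Set.range b), b.coord i x * b.coord j x =
    (volume (convexHull ℝ (Set.range b))).toReal * (1 + if i = j then 1 else 0) := by
  set D := convexHull ℝ (Set.range b) with hD
  set A := ∫ x in D, b.coord i x * b.coord i x with hA
  have hG : ∀ k l, ∫ x in D, b.coord k x * b.coord l x = (A / 2) * (1 + if k = l then 1 else 0) := by
    intro k l
    by_cases h : k = l
    · subst h
      rw [aux_swap b k i]; simp; ring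
    · rw [aux_off b k l h, aux_swap b k i]; simp [h]; ring
  have hV : (volume D).toReal = ∑ k, ∑ l, ∫ x in D, b.coord k x * b.coord l x := by
    have : ∀ k l, Integrable (fun x => b.coord k x * b.coord l x) (volume.restrict D) := by
      intro k l
      have ck := aux_cc b k
      have cl := aux_cc b l
      exact aux_int b _ (by fun_prop)
    simp_rw [← integral_finsetSum Finset.univ (fun l _ => this _ l)]
    rw [← integral_finsetSum Finset.univ (fun k _ => integrable_finsetSum _ (fun l _ => this k l))]
    simp_rw [← Finset.mul_sum, ← Finset.sum_mul, b.sum_coord_apply_eq_one]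
    simp [Measure.real]
  rw [hG, hV]
  simp_rw [hG, ← Finset.mul_sum, Finset.sum_add_distrib]
  simp
  ring

end

/-- `-Pow(Δ) = (d+1)/(d+2) · Vol(Δ) · (R² - ‖o - m‖²)` for a nondegenerate `d`-simplex. -/
theorem neg_pow_eq_circumradius_centroid {d : ℕ}
    (v : Fin (d + 1) → EuclideanSpace ℝ (Fin d)) (hv : AffineIndependent ℝ v)
    (o : EuclideanSpace ℝ (Fin d)) (R : ℝ) (ho : ∀ i, dist (v i) o = R)
    (m : EuclideanSpace ℝ (Fin d)) (hm : m = ((d : ℝ) + 1)⁻¹ • ∑ i, v i) :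
    -(∫ x in convexHull ℝ (Set.range v), (‖x - o‖ ^ 2 - R ^ 2)) =
      ((d : ℝ) + 1) / ((d : ℝ) + 2) * (volume (convexHull ℝ (Set.range v))).toReal *
        (R ^ 2 - ‖o - m‖ ^ 2) := by
  have htop : affineSpan ℝ (Set.range v) = ⊤ := by
    rw [hv.affineSpan_eq_top_iff_card_eq_finrank_add_one]
    simp
  let b : AffineBasis (Fin (d+1)) ℝ (EuclideanSpace ℝ (Fin d)) := ⟨v, hv, htop⟩
  have hb : ∀ i, b i = v i := fun i => rfl
  have hbv : (b : Fin (d+1) → _) = v := rfl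
  have hG := aux_G b
  have hint := aux_int b
  have hcc := aux_cc b
  have hfin : volume (convexHull ℝ (Set.range b)) ≠ ⊤ := (aux_compact b).measure_ne_top
  rw [hbv] at hG hint hfin
  set D := convexHull ℝ (Set.range v) with hD
  set V := (volume D).toReal with hVd
  let u := fun i => v i - o
  have hu : ∀ i, inner ℝ (u i) (u i) = R ^ 2 := by
    intro i
    rw [real_inner_self_eq_norm_sq, ← ho i, dist_eq_norm]
  have hd : (0:ℝ) < d + 1 := by positivity
  have hx : ∀ x, x - o = ∑ i, b.coord i x • u i := by
    intro x
    simp only [u, smul_sub, Finset.sum_sub_distrib, ← Finset.sum_smul, b.sum_coord_apply_eq_one,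
      one_smul]
    congr 1
    exact (b.linear_combination_coord_eq_self x).symm
  have hnorm : ∀ x, ‖x - o‖ ^ 2 = ∑ i, ∑ j, (b.coord i x * b.coord j x) * inner ℝ (u i) (u j) := by
    intro x
    rw [← real_inner_self_eq_norm_sq, hx, sum_inner]
    simp_rw [inner_sum, real_inner_smul_left, real_inner_smul_right]
    simp_rw [mul_assoc]
  have hI : ∀ k l, Integrable (fun x => b.coord k x * b.coord l x * inner ℝ (u k) (u l))
      (volume.restrict D) := by
    intro k l
    have ck := hcc k
    have cl := hcc l
    exact hint _ (by fun_prop)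
  have hN : ∫ x in D, ‖x - o‖ ^ 2 =
      ∑ i, ∑ j, (∫ x in D, b.coord i x * b.coord j x) * inner ℝ (u i) (u j) := by
    simp_rw [hnorm]
    rw [integral_finsetSum Finset.univ (fun k _ => integrable_finsetSum _ (fun l _ => hI k l))]
    simp_rw [integral_finsetSum Finset.univ (fun l _ => hI _ l), integral_mul_const]
  have hS : ∑ i, u i = ((d:ℝ) + 1) • (m - o) := by
    simp only [u, Finset.sum_sub_distrib, hm, smul_sub, smul_smul, mul_inv_cancel₀ hd.ne', one_smul]
    simp [← Nat.cast_smul_eq_nsmul ℝ]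
  have hSn : ∑ i, ∑ j, inner ℝ (u i) (u j) = ((d:ℝ) + 1)^2 * ‖o - m‖ ^ 2 := by
    simp_rw [← inner_sum, ← sum_inner]
    rw [real_inner_self_eq_norm_sq, hS, norm_smul, mul_pow, norm_sub_rev, Real.norm_eq_abs, sq_abs]
  have hG' : ∀ i j, ∫ x in D, b.coord i x * b.coord j x =
      V / (((d:ℝ)+1) * (d+2)) * (1 + if i = j then 1 else 0) := by
    intro i j
    have := hG i j
    simp only [Fintype.card_fin, Nat.cast_add, Nat.cast_one] at this
    rw [div_mul_eq_mul_div, eq_div_iff (by positivity), ← this]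
    ring
  have hN2 : ∫ x in D, ‖x - o‖ ^ 2 = V / (((d:ℝ)+1) * (d+2)) *
      (((d:ℝ) + 1)^2 * ‖o - m‖ ^ 2 + (d + 1) * R^2) := by
    rw [hN, ← hSn]
    simp_rw [hG', mul_assoc, ← Finset.mul_sum, add_mul, Finset.sum_add_distrib]
    simp only [ite_mul, one_mul, zero_mul, Finset.sum_ite_eq, Finset.mem_univ, if_true, hu]
    simp
    left
    ring
  rw [integral_sub (hint _ (by fun_prop)) (hint _ (by fun_prop)), hN2]
  simp only [integral_const, smul_eq_mul, Measure.real, Measure.restrict_apply_univ]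
  rw [← hVd]
  field_simp
  ring
end
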